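/- Let G be a finite group, g ∈ G, η an irreducible character of C_G(g), m a positive integer, and r an integer coprime to exp(G). Define ν_m(g,η) := (1/|C_G(g)|) Σ_{x ∈ G, x^m = (gx)^m} η(x^m). Then ν_m(g^r, η) = ν_m(g, ψ^r η) = σ_r(ν_m(g,η)), where ψ^r η is the Adams operation (ψ^r η)(x) = η(x^r) and σ_r is the field automorphism of the cyclotomic field ℚ(ζ_{exp(G)}) sending roots of unity to their r-th powers. -/

import Mathlib

open scoped Classical
open CategoryTheory

namespace MonoidAlgebra

variable {H : Type*} [Group H]

theorem trace_leftMulMatrix_basis {R : Type*} [CommRing R] [Fintype H] (z : MonoidAlgebra R H) :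
    (Algebra.leftMulMatrix (MonoidAlgebra.basis H R) z).trace =
      (Fintype.card H : R) * z.coeff 1 := by
  simp [Matrix.trace, Algebra.leftMulMatrix_eq_repr_mul, MonoidAlgebra.basis]

theorem commute_of_forall_commute_single {R : Type*} [CommRing R] {z : MonoidAlgebra R H}
    (hz : ∀ h : H, Commute z (single h 1)) (w : MonoidAlgebra R H) : Commute z w := by
  induction w using MonoidAlgebra.induction_on with
  | of h => exact hz h
  | add a b ha hb => exact ha.add_right hb
  | smul c a ha => exact ha.smul_right c

/-- For `p ∤ |H|`, the Frobenius map on the centre of `𝔽_p[H]` is the Adams operator. -/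
theorem coeff_pow_prime_of_commute [Fintype H] {p : ℕ} [Fact p.Prime]
    (hp : ¬ p ∣ Fintype.card H) {z : MonoidAlgebra (ZMod p) H}
    (hz : ∀ h : H, Commute z (single h 1)) (h : H) :
    (z ^ p).coeff (h ^ p) = z.coeff h := by
  have key := ZMod.trace_pow_card
    (Algebra.leftMulMatrix (MonoidAlgebra.basis H (ZMod p)) (z * single h⁻¹ 1))
  rw [← map_pow, trace_leftMulMatrix_basis, trace_leftMulMatrix_basis, ZMod.pow_card,
    (hz h⁻¹).mul_pow, single_pow] at key
  have hc : (Fintype.card H : ZMod p) ≠ 0 := by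
    rwa [Ne, ZMod.natCast_eq_zero_iff]
  simpa using mul_left_cancel₀ hc key

end MonoidAlgebra

theorem Subgroup.centralizer_pow_of_coprime {H : Type*} [Group H] {n : ℕ} {x : H}
    (hn : n.Coprime (orderOf x)) :
    Subgroup.centralizer {x ^ n} = Subgroup.centralizer {x} := by
  ext y
  simp only [Subgroup.mem_centralizer_singleton_iff]
  refine ⟨fun h => ?_, fun h => Commute.pow_right h n⟩
  obtain ⟨k, hk⟩ := exists_pow_eq_self_of_coprime hn
  exact hk ▸ Commute.pow_right (show Commute y (x ^ n) from h) k

section Roots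

variable {H : Type*} [Group H] [Fintype H]

/-- The sum of the `m`-th roots of `u` in the group algebra. -/
noncomputable def rootSum (R : Type*) [CommRing R] (m : ℕ) (u : H) : MonoidAlgebra R H :=
  .ofCoeff (Finsupp.equivFunOnFinite.symm fun x => if x ^ m = u then 1 else 0)

theorem coeff_rootSum (R : Type*) [CommRing R] (m : ℕ) (u x : H) :
    (rootSum R m u).coeff x = if x ^ m = u then 1 else 0 := rfl

theorem commute_rootSum_single (R : Type*) [CommRing R] (m : ℕ) {u : H}
    (hu : ∀ h, Commute h u) (h : H) :
    Commute (rootSum R m u) (MonoidAlgebra.single h 1) := by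
  ext x
  have hconj : h⁻¹ * x = h⁻¹ * (x * h⁻¹) * (h⁻¹)⁻¹ := by group
  have : (h⁻¹ * x) ^ m = u ↔ (x * h⁻¹) ^ m = u := by
    rw [hconj, conj_pow, mul_inv_eq_iff_eq_mul, ← (hu h⁻¹).eq, mul_right_inj]
  simp [coeff_rootSum, this]

theorem rootSum_pow_prime {p : ℕ} [hp : Fact p.Prime] (hpH : ¬ p ∣ Fintype.card H)
    (m : ℕ) {u : H} (hu : ∀ h, Commute h u) :
    rootSum (ZMod p) m u ^ p = rootSum (ZMod p) m (u ^ p) := by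
  have hn : (Nat.card H).Coprime p := by
    rw [Nat.card_eq_fintype_card]
    exact ((Nat.Prime.coprime_iff_not_dvd hp.out).2 hpH).symm
  ext y
  obtain ⟨x, rfl⟩ := (powCoprime hn).surjective y
  rw [powCoprime_apply, MonoidAlgebra.coeff_pow_prime_of_commute hpH
    (commute_rootSum_single _ m hu), coeff_rootSum, coeff_rootSum, pow_right_comm,
    ← powCoprime_apply hn, ← powCoprime_apply hn, (powCoprime hn).injective.eq_iff]

/-- The number of `x` with `x ^ m = u` and `(g * x) ^ m = u`. -/
noncomputable def rootCount (m : ℕ) (g u : H) : ℕ :=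
  (Finset.univ.filter fun x : H => x ^ m = u ∧ (g * x) ^ m = u).card

theorem coeff_rootSum_mul_rootSum_inv (R : Type*) [CommRing R] (m : ℕ) (g u : H) :
    (rootSum R m u * rootSum R m u⁻¹).coeff g = rootCount m g u := by
  rw [MonoidAlgebra.coeff_mul_antidiag _ _ g (Finset.univ.image fun x : H => (g * x, x⁻¹)),
    Finset.sum_image, rootCount, Finset.card_filter]
  · push_cast
    refine Finset.sum_congr rfl fun x _ => ?_
    simp only [coeff_rootSum, inv_pow, inv_inj]
    split_ifs <;> simp_all
  · intro x _ y _ hxy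
    simpa using (Prod.ext_iff.1 hxy).2
  · rintro ⟨a, b⟩
    simp only [Finset.mem_image, Finset.mem_univ, true_and, Prod.mk.injEq]
    constructor
    · rintro ⟨x, rfl, rfl⟩
      simp
    · intro hab
      exact ⟨b⁻¹, by simp [← hab], by simp⟩

theorem rootCount_pow_prime_of_central {p : ℕ} (hp : p.Prime) (hpH : Fintype.card H < p)
    (m : ℕ) (g : H) {u : H} (hu : ∀ h, Commute h u) :
    rootCount m (g ^ p) (u ^ p) = rootCount m g u := by
  have : Fact p.Prime := ⟨hp⟩
  have hndvd : ¬ p ∣ Fintype.card H := Nat.not_dvd_of_pos_of_lt Fintype.card_pos hpH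
  have hui : ∀ h, Commute h u⁻¹ := fun h => (hu h).inv_right
  have hcomm : ∀ h, Commute (rootSum (ZMod p) m u * rootSum (ZMod p) m u⁻¹)
      (MonoidAlgebra.single h 1) := fun h =>
    (commute_rootSum_single _ m hu h).mul_left (commute_rootSum_single _ m hui h)
  have hprod : Commute (rootSum (ZMod p) m u) (rootSum (ZMod p) m u⁻¹) :=
    MonoidAlgebra.commute_of_forall_commute_single (commute_rootSum_single _ m hu) _
  have key := MonoidAlgebra.coeff_pow_prime_of_commute hndvd hcomm g
  rw [hprod.mul_pow, rootSum_pow_prime hndvd m hu, rootSum_pow_prime hndvd m hui, inv_pow,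
    coeff_rootSum_mul_rootSum_inv, coeff_rootSum_mul_rootSum_inv] at key
  have hlt : ∀ a b : H, rootCount m a b < p := fun a b =>
    (Finset.card_le_univ _).trans_lt hpH
  rw [ZMod.natCast_eq_natCast_iff'] at key
  rwa [Nat.mod_eq_of_lt (hlt _ _), Nat.mod_eq_of_lt (hlt _ _)] at key

theorem rootCount_subgroup (m : ℕ) (K : Subgroup H) (g u : K)
    (hK : Subgroup.centralizer {(u : H)} ≤ K) :
    rootCount m g u = rootCount m (g : H) (u : H) := by
  refine Finset.card_bij (fun x _ => (x : H)) ?_ (fun _ _ _ _ h => Subtype.ext h) ?_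
  · simp [Subtype.ext_iff]
  · intro x hx
    rw [Finset.mem_filter_univ] at hx
    have hxu : Commute x u := hx.1 ▸ (Commute.refl x).pow_right m
    exact ⟨⟨x, hK (Subgroup.mem_centralizer_singleton_iff.2 hxu.eq)⟩,
      by simpa [Subtype.ext_iff] using hx, rfl⟩

theorem commute_of_rootCount_ne_zero {m : ℕ} {g u : H} (h : rootCount m g u ≠ 0) :
    Commute g u := by
  obtain ⟨x, hx⟩ := Finset.card_ne_zero.1 h
  rw [Finset.mem_filter_univ] at hx
  have h1 : Commute x u := hx.1 ▸ (Commute.refl x).pow_right m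
  have h2 : Commute (g * x) u := by
    have := (Commute.refl (g * x)).pow_right m
    rwa [hx.2] at this
  simpa using h2.mul_left h1.inv_left

theorem coprime_orderOf_of_card_lt {p : ℕ} (hp : p.Prime) (hpH : Fintype.card H < p) (x : H) :
    p.Coprime (orderOf x) :=
  Nat.coprime_of_lt_prime (orderOf_pos x).ne' (orderOf_le_card_univ.trans_lt hpH) hp

/-- The numbers of simultaneous roots are invariant under raising `g` and `u` to the power of a
prime exceeding the order of the group. -/
theorem rootCount_pow_prime {p : ℕ} (hp : p.Prime) (hpH : Fintype.card H < p)
    (m : ℕ) (g u : H) :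
    rootCount m (g ^ p) (u ^ p) = rootCount m g u := by
  have hcu := Subgroup.centralizer_pow_of_coprime (coprime_orderOf_of_card_lt hp hpH u)
  have hcg := Subgroup.centralizer_pow_of_coprime (coprime_orderOf_of_card_lt hp hpH g)
  by_cases hgu : Commute g u
  · have hu : u ∈ Subgroup.centralizer {u} := Subgroup.mem_centralizer_singleton_iff.2 rfl
    have hg : g ∈ Subgroup.centralizer {u} := Subgroup.mem_centralizer_singleton_iff.2 hgu.eq
    have key := rootCount_pow_prime_of_central hp
      ((Fintype.card_subtype_le (· ∈ Subgroup.centralizer {u})).trans_lt hpH) m ⟨g, hg⟩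
      (u := ⟨u, hu⟩) fun h => Subtype.ext (Subgroup.mem_centralizer_singleton_iff.1 h.2)
    rwa [rootCount_subgroup m _ _ _ hcu.le, rootCount_subgroup m _ _ _ le_rfl] at key
  · have hzero : rootCount m g u = 0 := by
      contrapose! hgu
      exact commute_of_rootCount_ne_zero hgu
    rw [hzero]
    by_contra h
    have h1 : g ^ p ∈ Subgroup.centralizer {u ^ p} :=
      Subgroup.mem_centralizer_singleton_iff.2 (commute_of_rootCount_ne_zero h).eq
    rw [hcu, Subgroup.mem_centralizer_singleton_iff] at h1
    have h2 : u ∈ Subgroup.centralizer {g ^ p} := Subgroup.mem_centralizer_singleton_iff.2 h1.symm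
    rw [hcg, Subgroup.mem_centralizer_singleton_iff] at h2
    exact hgu h2.symm

theorem sum_ite_pow_eq_sum_rootCount {R : Type*} [CommRing R] (m : ℕ) (g : H) (f : H → R) :
    ∑ x : H, (if x ^ m = (g * x) ^ m then f (x ^ m) else 0) =
      ∑ u : H, (rootCount m g u : R) * f u := by
  simp only [rootCount, Finset.card_filter, Nat.cast_sum, Finset.sum_mul]
  rw [Finset.sum_comm]
  refine Finset.sum_congr rfl fun x _ => ?_
  rw [Finset.sum_eq_single (x ^ m)]
  · simp [eq_comm]
  · intro u _ hu
    simp [hu.symm]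
  · simp

theorem sum_ite_pow_prime {R : Type*} [CommRing R] {p : ℕ} (hp : p.Prime)
    (hpH : Fintype.card H < p) (m : ℕ) (g : H) (f : H → R) :
    ∑ x : H, (if x ^ m = (g ^ p * x) ^ m then f (x ^ m) else 0) =
      ∑ x : H, (if x ^ m = (g * x) ^ m then f ((x ^ m) ^ p) else 0) := by
  have hn : (Nat.card H).Coprime p := by
    rw [Nat.card_eq_fintype_card]
    exact (Nat.coprime_of_lt_prime Fintype.card_ne_zero hpH hp).symm
  rw [sum_ite_pow_eq_sum_rootCount,
    sum_ite_pow_eq_sum_rootCount m g fun y => f (y ^ p), ← (powCoprime hn).sum_comp]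
  simp only [powCoprime_apply, rootCount_pow_prime hp hpH]

end Roots

theorem LinearMap.map_trace_eq_trace_pow {V : Type*} [AddCommGroup V] [Module ℂ V]
    [FiniteDimensional ℂ V] (T : Module.End ℂ V) {n : ℕ} (hn : n ≠ 0) (hT : T ^ n = 1) (r : ℕ)
    (σ : ℂ →+* ℂ) (hσ : ∀ ζ : ℂ, ζ ^ n = 1 → σ ζ = ζ ^ r) :
    σ (LinearMap.trace ℂ V T) = LinearMap.trace ℂ V (T ^ r) := by
  have hss : T.IsSemisimple := by
    refine Module.End.isSemisimple_of_squarefree_aeval_eq_zero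
      (p := Polynomial.X ^ n - Polynomial.C 1) ?_ (by simp [hT])
    exact (Polynomial.separable_X_pow_sub_C 1 (by exact_mod_cast hn) one_ne_zero).squarefree
  have hint := DirectSum.isInternal_submodule_of_iSupIndep_of_iSup_eq_top
    T.eigenspaces_iSupIndep hss.iSup_eigenspace_eq_top
  have hfin : {μ | T.eigenspace μ ≠ ⊥}.Finite :=
    WellFoundedGT.finite_ne_bot_of_iSupIndep T.eigenspaces_iSupIndep
  have hpow : ∀ (k : ℕ) (μ : ℂ), ∀ v ∈ T.eigenspace μ, (T ^ k) v = μ ^ k • v := by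
    intro k μ v hv
    rw [Module.End.mem_eigenspace_iff] at hv
    induction k with
    | zero => simp
    | succ k ih => rw [pow_succ', Module.End.mul_apply, ih, map_smul, hv, smul_smul, pow_succ]
  have htr : ∀ k : ℕ, LinearMap.trace ℂ V (T ^ k) =
      ∑ μ ∈ hfin.toFinset, μ ^ k * Module.finrank ℂ (T.eigenspace μ) := by
    intro k
    have hmaps : ∀ μ, Set.MapsTo (T ^ k) (T.eigenspace μ) (T.eigenspace μ) := by
      intro μ v hv
      rw [hpow k μ v hv]
      exact Submodule.smul_mem _ _ hv
    rw [LinearMap.trace_eq_sum_trace_restrict' hint hfin hmaps]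
    refine Finset.sum_congr rfl fun μ _ => ?_
    have : (T ^ k).restrict (hmaps μ) = μ ^ k • LinearMap.id := by
      exact LinearMap.ext fun v => Subtype.ext (hpow k μ v v.2)
    rw [this, map_smul, LinearMap.trace_id, smul_eq_mul]
  have h1 := htr 1
  rw [pow_one] at h1
  rw [h1, htr r, map_sum]
  refine Finset.sum_congr rfl fun μ hμ => ?_
  obtain ⟨v, hv, hv0⟩ := Submodule.exists_mem_ne_zero_of_ne_bot (hfin.mem_toFinset.1 hμ)
  have hμn : μ ^ n = 1 := by
    have := hpow n μ v hv
    rw [hT, Module.End.one_apply] at this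
    exact smul_left_injective ℂ hv0 (by simpa using this.symm)
  rw [map_mul, map_natCast, pow_one, hσ μ hμn]

theorem FDRep.map_character_eq_character_pow {H : Type*} [Group H] (V : FDRep ℂ H) {n : ℕ}
    (hn : n ≠ 0) (h : H) (hh : h ^ n = 1) (r : ℕ) (σ : ℂ →+* ℂ)
    (hσ : ∀ ζ : ℂ, ζ ^ n = 1 → σ ζ = ζ ^ r) :
    σ (V.character h) = V.character (h ^ r) := by
  rw [FDRep.character, FDRep.character, map_pow]
  exact LinearMap.map_trace_eq_trace_pow _ hn (by rw [← map_pow, hh, map_one]) r σ hσ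

/-- ν_m(g^r, η) = ν_m(g, ψ^r η) = σ_r(ν_m(g, η)) for r coprime to exp(G), where
ν_m(g,η) = (1/|C_G(g)|) Σ_{x^m=(gx)^m} η(x^m), ψ^r is the Adams operator
(ψ^r η)(x) = η(x^r), and σ_r is any field embedding ℂ → ℂ sending each exp(G)-th
root of unity to its r-th power (so it restricts to the Galois automorphism
ζ ↦ ζ^r of ℚ(ζ_{exp G})).  Note C_G(g^r) = C_G(g); the character η of C_G(g) is
extended by 0 outside the centralizer. -/
theorem stmt15 {G : Type} [Group G] [Fintype G] (g : G) (m : ℕ) (hm : 0 < m)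
    (r : ℕ) (hr : r.Coprime (Monoid.exponent G))
    (V : FDRep ℂ ↥(Subgroup.centralizer ({g} : Set G))) (hV : Simple V)
    (σ : ℂ →+* ℂ) (hσ : ∀ ζ : ℂ, ζ ^ Monoid.exponent G = 1 → σ ζ = ζ ^ r) :
    (let η : G → ℂ := fun x =>
      if h : x ∈ Subgroup.centralizer ({g} : Set G) then V.character ⟨x, h⟩ else 0;
    (1 / (Nat.card (Subgroup.centralizer ({g ^ r} : Set G)) : ℂ)) *
        ∑ x : G, (if x ^ m = (g ^ r * x) ^ m then η (x ^ m) else 0) =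
      (1 / (Nat.card (Subgroup.centralizer ({g} : Set G)) : ℂ)) *
        ∑ x : G, (if x ^ m = (g * x) ^ m then η ((x ^ m) ^ r) else 0) ∧
    (1 / (Nat.card (Subgroup.centralizer ({g ^ r} : Set G)) : ℂ)) *
        ∑ x : G, (if x ^ m = (g ^ r * x) ^ m then η (x ^ m) else 0) =
      σ ((1 / (Nat.card (Subgroup.centralizer ({g} : Set G)) : ℂ)) *
        ∑ x : G, (if x ^ m = (g * x) ^ m then η (x ^ m) else 0))) := by
  intro η
  have hexp : Monoid.exponent G ≠ 0 := Monoid.exponent_ne_zero_of_finite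
  have : NeZero (Monoid.exponent G) := ⟨hexp⟩
  obtain ⟨p, hpG, hp, hpr⟩ := Nat.forall_exists_prime_gt_and_eq_mod
    ((ZMod.isUnit_iff_coprime r (Monoid.exponent G)).2 hr) (Fintype.card G)
  have hpow : ∀ x : G, x ^ r = x ^ p := fun x => by
    rw [Monoid.pow_eq_mod_exponent x, ← (ZMod.natCast_eq_natCast_iff' _ _ _).1 hpr,
      ← Monoid.pow_eq_mod_exponent]
  have hcen : ∀ x : G, Subgroup.centralizer {x ^ r} = Subgroup.centralizer {x} := fun x =>
    Subgroup.centralizer_pow_of_coprime (hr.coprime_dvd_right (Monoid.order_dvd_exponent x))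
  have hη : ∀ x, σ (η x) = η (x ^ r) := fun x => by
    have hmem : x ^ r ∈ Subgroup.centralizer {g} ↔ x ∈ Subgroup.centralizer {g} := by
      have := SetLike.ext_iff.1 (hcen x) g
      simpa only [Subgroup.mem_centralizer_singleton_iff, eq_comm] using this
    by_cases hx : x ∈ Subgroup.centralizer {g}
    · simp only [η, dif_pos hx, dif_pos (hmem.2 hx)]
      exact V.map_character_eq_character_pow hexp ⟨x, hx⟩
        (Subtype.ext (Monoid.pow_exponent_eq_one x)) r σ hσ
    · simp only [η, dif_neg hx, dif_neg (mt hmem.1 hx), map_zero]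
  have hsum := sum_ite_pow_prime hp hpG m g η
  simp only [← hpow] at hsum
  rw [hcen g, hsum]
  refine ⟨rfl, ?_⟩
  simp only [map_mul, map_div₀, map_one, map_natCast, map_sum, apply_ite σ, map_zero, hη]
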